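/- Let M be a lattice log concave integer-valued random variable with support S, and for x, d ∈ ℤ define ρ_x^{(d)} = P(M ≤ x−1)P(M = d) / (P(M ≤ d−1)P(M = x)) if x ∈ S, d−1 ∈ S and x ≤ d, and ρ_x^{(d)} = 0 otherwise. Then: (a) 0 ≤ ρ_x^{(d)} ≤ 1 for all x, d ∈ ℤ; and (b) if d−1 ∈ S and N, Z are random variables on a common probability space such that N has the conditional distribution of M given M ≤ d, and conditionally on N, Z is Bernoulli with success probability ρ_N^{(d)}, then N − Z has the conditional distribution of M given M ≤ d−1. -/

import Mathlib

open MeasureTheory ProbabilityTheory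

/-- The law of a lattice log concave integer valued random variable, presented as a
probability measure `μ` on `ℤ`: the support is an integer interval and the point
masses satisfy `p_{x-1} p_{x+1} ≤ p_x ^ 2`. -/
def IsLatticeLogConcave (μ : Measure ℤ) : Prop :=
  (∀ x y z : ℤ, x ≤ y → y ≤ z → μ {x} ≠ 0 → μ {z} ≠ 0 → μ {y} ≠ 0) ∧
  (∀ x : ℤ, (μ {x - 1}).toReal * (μ {x + 1}).toReal ≤ (μ {x}).toReal ^ 2)

/-- `ρ_x^{(d)} = P(M ≤ x-1) P(M = d) / (P(M ≤ d-1) P(M = x))` when `x` and `d-1` are in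
the support of `μ` and `x ≤ d`, and `0` otherwise. -/
noncomputable def rhoCoef (μ : Measure ℤ) (d x : ℤ) : ℝ :=
  if μ {x} ≠ 0 ∧ μ {d - 1} ≠ 0 ∧ x ≤ d then
    ((μ (Set.Iic (x - 1))).toReal * (μ {d}).toReal) /
      ((μ (Set.Iic (d - 1))).toReal * (μ {x}).toReal)
  else 0

/-!
Write `F x = P(M ≤ x)` and `p x = P(M = x)`. Log-concavity without internal zeros gives
`p a * p (b + k) ≤ p (a + k) * p b` for `a ≤ b` and `0 ≤ k`. Taking `a = x - k` and `b = d - k`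
and summing over `1 ≤ k` yields `F (x - 1) * p d ≤ F (d - 1) * p x`, that is `ρ_x ≤ 1`.

For the coupling, `ρ` is exactly the choice that makes the distribution functions agree: for `n < d`
the event `N - Z ≤ n` is the disjoint union of `N ≤ n` and `N = n + 1, Z = 1`, of total mass
`F n / F d + (F n * p d / (F (d - 1) * p (n + 1))) * (p (n + 1) / F d) = F n / F (d - 1)`.
If `p (n + 1) = 0`, then `F n * p d = 0` because the support has no gaps.
-/

open scoped ENNReal

/-- A log-concave sequence on `ℤ`. Order-connectedness of the support excludes internal zeros:
without it `1, 0, 0, 1` would satisfy the quadratic inequality. -/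
structure IsLogConcaveSeq {R : Type*} [CommSemiring R] [LinearOrder R] (p : ℤ → R) : Prop where
  nonneg (x : ℤ) : 0 ≤ p x
  ordConnected_support : (Function.support p).OrdConnected
  mul_le_sq (x : ℤ) : p (x - 1) * p (x + 1) ≤ p x ^ 2

namespace IsLogConcaveSeq

variable {R : Type*} [CommSemiring R] [LinearOrder R] [IsStrictOrderedRing R] {p : ℤ → R}
  {x y z : ℤ}

/-- Cancelling `p y` is legitimate even if `p y = 0`, since then `p x * p z = 0`. -/
theorem mul_le_of_mul_mul_le_mul (hp : IsLogConcaveSeq p) (hxy : x ≤ y) (hyz : y ≤ z) {c : R}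
    (hc : 0 ≤ c) (h : p x * p z * p y ≤ c * p y) : p x * p z ≤ c := by
  rcases eq_or_ne (p x) 0 with hx | hx
  · rwa [hx, zero_mul]
  rcases eq_or_ne (p z) 0 with hz | hz
  · rwa [hz, mul_zero]
  have hy : p y ≠ 0 := hp.ordConnected_support.out hx hz ⟨hxy, hyz⟩
  exact le_of_mul_le_mul_right h ((hp.nonneg y).lt_of_ne' hy)

theorem mul_succ_le_succ_mul (hp : IsLogConcaveSeq p) (hxy : x ≤ y) :
    p x * p (y + 1) ≤ p (x + 1) * p y := by
  induction y, hxy using Int.leInduction with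
  | base => rw [mul_comm]
  | succ y hxy ih =>
    refine hp.mul_le_of_mul_mul_le_mul hxy (by lia) (mul_nonneg (hp.nonneg _) (hp.nonneg _)) ?_
    have hsq : p y * p (y + 1 + 1) ≤ p (y + 1) ^ 2 := by
      simpa only [add_sub_cancel_right] using hp.mul_le_sq (y + 1)
    calc p x * p (y + 1 + 1) * p y = p x * (p y * p (y + 1 + 1)) := by ring
      _ ≤ p x * p (y + 1) ^ 2 := mul_le_mul_of_nonneg_left hsq (hp.nonneg x)
      _ = p x * p (y + 1) * p (y + 1) := by ring
      _ ≤ p (x + 1) * p y * p (y + 1) := mul_le_mul_of_nonneg_right ih (hp.nonneg _)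
      _ = p (x + 1) * p (y + 1) * p y := by ring

theorem mul_add_le_add_mul (hp : IsLogConcaveSeq p) (hxy : x ≤ y) (k : ℕ) :
    p x * p (y + k) ≤ p (x + k) * p y := by
  induction k with
  | zero => simp
  | succ k ih =>
    push_cast
    rw [← add_assoc, ← add_assoc]
    refine hp.mul_le_of_mul_mul_le_mul (y := y + k) (by lia) (by lia)
      (mul_nonneg (hp.nonneg _) (hp.nonneg _)) ?_
    have hstep : p (x + k) * p (y + k + 1) ≤ p (x + k + 1) * p (y + k) :=
      hp.mul_succ_le_succ_mul (by lia)
    calc p x * p (y + k + 1) * p (y + k) = p x * p (y + k) * p (y + k + 1) := by ring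
      _ ≤ p (x + k) * p y * p (y + k + 1) := mul_le_mul_of_nonneg_right ih (hp.nonneg _)
      _ = p (x + k) * p (y + k + 1) * p y := by ring
      _ ≤ p (x + k + 1) * p (y + k) * p y := mul_le_mul_of_nonneg_right hstep (hp.nonneg _)
      _ = p (x + k + 1) * p y * p (y + k) := by ring

end IsLogConcaveSeq

section Preorder

variable {α : Type*} [Preorder α] [MeasurableSpace α] {μ : Measure α} {x y d : α}

theorem measure_singleton_ne_top_of_Iic (hd : μ (Set.Iic d) ≠ ∞) (hxd : x ≤ d) : μ {x} ≠ ∞ :=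
  measure_ne_top_of_subset (Set.singleton_subset_iff.2 hxd) hd

theorem measureReal_Iic_pos (hd : μ (Set.Iic d) ≠ ∞) (hx : μ {x} ≠ 0) (hxd : x ≤ d) :
    0 < μ.real (Set.Iic d) :=
  ENNReal.toReal_pos (mt (measure_mono_null (Set.singleton_subset_iff.2 hxd)) hx) hd

theorem measure_Iic_eq_zero_of_ordConnected_support [Countable α]
    (hS : (Function.support fun z => μ {z}).OrdConnected) (hx : μ {x} = 0) (hxy : x ≤ y)
    (hy : μ {y} ≠ 0) : μ (Set.Iic x) = 0 := by
  refine (measure_null_iff_singleton (Set.to_countable _)).2 fun z hz => ?_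
  by_contra hz0
  exact hS.out hz0 hy ⟨hz, hxy⟩ hx

end Preorder

section LowerTail

variable {μ : Measure ℤ} {x d : ℤ}

theorem measureReal_Iic_eq_add_singleton (hd : μ (Set.Iic d) ≠ ∞) :
    μ.real (Set.Iic d) = μ.real (Set.Iic (d - 1)) + μ.real {d} := by
  have hsplit : Set.Iic d = Set.Iic (d - 1) ∪ {d} := by
    ext z
    simp only [Set.mem_Iic, Set.mem_union, Set.mem_singleton_iff]
    lia
  rw [hsplit] at hd ⊢
  exact measureReal_union (by simp) (measurableSet_singleton d)
    (measure_ne_top_of_subset Set.subset_union_left hd)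
    (measure_ne_top_of_subset Set.subset_union_right hd)

theorem hasSum_measureReal_singleton_sub (hd : μ (Set.Iic d) ≠ ∞) :
    HasSum (fun k : ℕ => μ.real {d - (k : ℤ)}) (μ.real (Set.Iic d)) := by
  have hUnion : Set.Iic d = ⋃ k : ℕ, {d - (k : ℤ)} := by
    ext z
    simp only [Set.mem_Iic, Set.mem_iUnion, Set.mem_singleton_iff]
    exact ⟨fun hz => ⟨(d - z).toNat, by lia⟩, by rintro ⟨k, rfl⟩; lia⟩
  have hdisj : Pairwise (Function.onFun Disjoint fun k : ℕ => ({d - (k : ℤ)} : Set ℤ)) := by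
    intro i j hij
    simp only [Function.onFun, Set.disjoint_singleton]
    lia
  have htsum : μ (Set.Iic d) = ∑' k : ℕ, μ {d - (k : ℤ)} := by
    rw [hUnion, measure_iUnion hdisj fun _ => measurableSet_singleton _]
  have hne : ∀ k : ℕ, μ {d - (k : ℤ)} ≠ ∞ := fun k =>
    measure_singleton_ne_top_of_Iic hd (by lia)
  rw [measureReal_def, htsum, ENNReal.tsum_toReal_eq hne]
  exact ENNReal.hasSum_toReal (htsum ▸ hd)

theorem measureReal_Iic_mul_singleton_le (hp : IsLogConcaveSeq fun z => μ.real {z})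
    (hd : μ (Set.Iic (d - 1)) ≠ ∞) (hxd : x ≤ d) :
    μ.real (Set.Iic (x - 1)) * μ.real {d} ≤ μ.real (Set.Iic (d - 1)) * μ.real {x} := by
  have hx : μ (Set.Iic (x - 1)) ≠ ∞ :=
    measure_ne_top_of_subset (Set.Iic_subset_Iic.2 (by lia)) hd
  refine hasSum_le (fun k => ?_) ((hasSum_measureReal_singleton_sub hx).mul_right _)
    ((hasSum_measureReal_singleton_sub hd).mul_right _)
  have h := hp.mul_add_le_add_mul (x := x - 1 - k) (y := d - 1 - k) (by lia) (k + 1)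
  have hx' : x - 1 - (k : ℤ) + (k + 1 : ℕ) = x := by lia
  have hd' : d - 1 - (k : ℤ) + (k + 1 : ℕ) = d := by lia
  rwa [hx', hd', mul_comm (μ.real {x})] at h

end LowerTail

section RhoCoef

variable {μ : Measure ℤ} {x d : ℤ}

theorem rhoCoef_nonneg : 0 ≤ rhoCoef μ d x := by
  unfold rhoCoef
  split_ifs <;> positivity

theorem rhoCoef_le_one (hp : IsLogConcaveSeq fun z => μ.real {z})
    (hd : μ (Set.Iic (d - 1)) ≠ ∞) : rhoCoef μ d x ≤ 1 := by
  unfold rhoCoef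
  split_ifs with h
  · exact div_le_one_of_le₀ (measureReal_Iic_mul_singleton_le hp hd h.2.2) (by positivity)
  · exact zero_le_one

theorem rhoCoef_eq_zero_of_lt (hdx : d < x) : rhoCoef μ d x = 0 :=
  if_neg fun h => hdx.not_ge h.2.2

theorem rhoCoef_mul_measureReal_singleton (hS : (Function.support fun z => μ {z}).OrdConnected)
    (hfin : μ (Set.Iic d) ≠ ∞) (hd : μ {d - 1} ≠ 0) (hxd : x ≤ d) :
    rhoCoef μ d x * μ.real {x} =
      μ.real (Set.Iic (x - 1)) * μ.real {d} / μ.real (Set.Iic (d - 1)) := by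
  rcases eq_or_ne (μ {x}) 0 with hx | hx
  · have hx' : μ.real {x} = 0 := by rw [measureReal_def, hx, ENNReal.toReal_zero]
    suffices μ.real (Set.Iic (x - 1)) * μ.real {d} = 0 by rw [hx', this, mul_zero, zero_div]
    rcases hxd.eq_or_lt with rfl | hlt
    · rw [hx', mul_zero]
    · have hIic : μ (Set.Iic (x - 1)) = 0 := measure_mono_null (Set.Iic_subset_Iic.2 (by lia))
        (measure_Iic_eq_zero_of_ordConnected_support hS hx (by lia) hd)
      rw [measureReal_def, hIic, ENNReal.toReal_zero, zero_mul]
  · have hx' : μ.real {x} ≠ 0 :=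
      (measureReal_ne_zero_iff (measure_singleton_ne_top_of_Iic hfin hxd)).2 hx
    rw [rhoCoef, if_pos ⟨hx, hd, hxd⟩]
    simp only [← measureReal_def]
    field_simp

end RhoCoef

theorem measureReal_cond_apply {α : Type*} [MeasurableSpace α] (μ : Measure α) {s : Set α}
    (hs : MeasurableSet s) (t : Set α) : (μ[|s]).real t = μ.real (s ∩ t) / μ.real s := by
  rw [measureReal_def, cond_apply hs, ENNReal.toReal_mul, ENNReal.toReal_inv, div_eq_inv_mul]
  rfl

section Coupling

variable {Ω : Type*} [MeasurableSpace Ω] {P : Measure Ω} {N Z : Ω → ℤ} {μ : Measure ℤ} {d : ℤ}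

theorem measureReal_sub_le_eq_add [IsFiniteMeasure P] (hN : AEMeasurable N P)
    (hZ : AEMeasurable Z P) (hZ01 : ∀ᵐ ω ∂P, Z ω = 0 ∨ Z ω = 1) (n : ℤ) :
    P.real {ω | N ω - Z ω ≤ n} =
      P.real {ω | N ω ≤ n} + P.real ({ω | Z ω = 1} ∩ {ω | N ω = n + 1}) := by
  have hmeas : NullMeasurableSet ({ω | Z ω = 1} ∩ {ω | N ω = n + 1}) P :=
    (hZ.nullMeasurableSet_preimage (measurableSet_singleton 1)).inter
      (hN.nullMeasurableSet_preimage (measurableSet_singleton (n + 1)))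
  have hdisj : Disjoint {ω | N ω ≤ n} ({ω | Z ω = 1} ∩ {ω | N ω = n + 1}) :=
    Set.disjoint_left.2 fun ω (hle : N ω ≤ n) hmem => by
      have : N ω = n + 1 := hmem.2
      lia
  rw [← measureReal_union₀ hmeas hdisj.aedisjoint]
  refine measureReal_congr (Filter.eventuallyEq_set.2 ?_)
  filter_upwards [hZ01] with ω hω
  simp only [Set.mem_ofPred_eq, Set.mem_union, Set.mem_inter_iff]
  lia

theorem measureReal_inter_eq_rhoCoef_mul (hN : HasLaw N (μ[|Set.Iic d]) P)
    (hZ : ∀ n : ℤ, P ({ω | Z ω = 1} ∩ {ω | N ω = n}) =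
      ENNReal.ofReal (rhoCoef μ d n) * P {ω | N ω = n}) (n : ℤ) :
    P.real ({ω | Z ω = 1} ∩ {ω | N ω = n}) =
      rhoCoef μ d n * μ.real {n} / μ.real (Set.Iic d) := by
  rw [measureReal_def, hZ, ENNReal.toReal_mul, ENNReal.toReal_ofReal rhoCoef_nonneg,
    ← measureReal_def, hN.measureReal_eq (p := (· = n)) (measurableSet_singleton n)]
  rcases le_or_gt n d with hnd | hdn
  · have hinter : Set.Iic d ∩ {m | m = n} = {n} :=
      Set.inter_eq_right.2 (Set.singleton_subset_iff.2 hnd)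
    rw [measureReal_cond_apply μ measurableSet_Iic, hinter, mul_div_assoc]
  · simp only [rhoCoef_eq_zero_of_lt hdn, zero_mul, zero_div]

theorem measureReal_sub_le_eq_cond (hS : (Function.support fun z => μ {z}).OrdConnected)
    (hfin : μ (Set.Iic d) ≠ ∞) (hd : μ {d - 1} ≠ 0)
    (hN : HasLaw N (μ[|Set.Iic d]) P) (hZm : AEMeasurable Z P)
    (hZ01 : ∀ᵐ ω ∂P, Z ω = 0 ∨ Z ω = 1)
    (hZ : ∀ n : ℤ, P ({ω | Z ω = 1} ∩ {ω | N ω = n}) =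
      ENNReal.ofReal (rhoCoef μ d n) * P {ω | N ω = n}) (n : ℤ) :
    P.real {ω | N ω - Z ω ≤ n} = (μ[|Set.Iic (d - 1)]).real (Set.Iic n) := by
  have : IsFiniteMeasure P := hN.isFiniteMeasure
  have hF := measureReal_Iic_eq_add_singleton hfin
  have hFd : 0 < μ.real (Set.Iic d) := measureReal_Iic_pos hfin hd (by lia)
  have hFd' : 0 < μ.real (Set.Iic (d - 1)) :=
    measureReal_Iic_pos (measure_ne_top_of_subset (Set.Iic_subset_Iic.2 (by lia)) hfin) hd le_rfl
  have hcdf : P.real {ω | N ω ≤ n} = μ.real (Set.Iic (min d n)) / μ.real (Set.Iic d) := by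
    rw [hN.measureReal_eq measurableSet_Iic, measureReal_cond_apply μ measurableSet_Iic]
    exact congrArg (fun s => μ.real s / _) Set.Iic_inter_Iic
  rw [measureReal_sub_le_eq_add hN.aemeasurable hZm hZ01, hcdf,
    measureReal_inter_eq_rhoCoef_mul hN hZ, measureReal_cond_apply μ measurableSet_Iic,
    Set.Iic_inter_Iic]
  rcases lt_or_ge n d with hnd | hdn
  · rw [rhoCoef_mul_measureReal_singleton hS hfin hd (by lia), add_sub_cancel_right,
      min_eq_right hnd.le, min_eq_right (by lia : n ≤ d - 1)]
    field_simp
    rw [hF]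
  · rw [rhoCoef_eq_zero_of_lt (by lia), min_eq_left hdn, min_eq_left (by lia : d - 1 ≤ n),
      div_self hFd.ne', div_self hFd'.ne', zero_mul, zero_div, add_zero]

theorem hasLaw_sub_cond_Iic_sub_one (hS : (Function.support fun z => μ {z}).OrdConnected)
    (hfin : μ (Set.Iic d) ≠ ∞) (hd : μ {d - 1} ≠ 0)
    (hN : HasLaw N (μ[|Set.Iic d]) P) (hZm : AEMeasurable Z P)
    (hZ01 : ∀ᵐ ω ∂P, Z ω = 0 ∨ Z ω = 1)
    (hZ : ∀ n : ℤ, P ({ω | Z ω = 1} ∩ {ω | N ω = n}) =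
      ENNReal.ofReal (rhoCoef μ d n) * P {ω | N ω = n}) :
    HasLaw (fun ω => N ω - Z ω) (μ[|Set.Iic (d - 1)]) P := by
  have : IsFiniteMeasure P := hN.isFiniteMeasure
  have hNZ : AEMeasurable (fun ω => N ω - Z ω) P := hN.aemeasurable.sub hZm
  refine ⟨hNZ, Measure.ext_of_Iic _ _ fun n => ?_⟩
  rw [← measureReal_eq_measureReal_iff,
    map_measureReal_apply_of_aemeasurable hNZ measurableSet_Iic]
  exact measureReal_sub_le_eq_cond hS hfin hd hN hZm hZ01 hZ n

end Coupling

theorem IsLatticeLogConcave.ordConnected_support {μ : Measure ℤ} (hLC : IsLatticeLogConcave μ) :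
    (Function.support fun x => μ {x}).OrdConnected :=
  ⟨fun x hx z hz y hy => hLC.1 x y z hy.1 hy.2 hx hz⟩

theorem isLogConcaveSeq_measureReal {μ : Measure ℤ} (hfin : ∀ x, μ {x} ≠ ∞)
    (hS : (Function.support fun x => μ {x}).OrdConnected)
    (hsq : ∀ x, μ.real {x - 1} * μ.real {x + 1} ≤ μ.real {x} ^ 2) :
    IsLogConcaveSeq fun x => μ.real {x} where
  nonneg _ := measureReal_nonneg
  ordConnected_support := by
    have hsupp : (Function.support fun x => μ.real {x}) = Function.support fun x => μ {x} :=
      Set.ext fun x => measureReal_ne_zero_iff (hfin x)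
    rwa [hsupp]
  mul_le_sq := hsq

universe u

theorem subtract_one_coupling_of_latticeLogConcave_general
    {μ : Measure ℤ} (hfin : ∀ x, μ (Set.Iic x) ≠ ∞)
    (hS : (Function.support fun x => μ {x}).OrdConnected) :
    ((∀ x, μ.real {x - 1} * μ.real {x + 1} ≤ μ.real {x} ^ 2) →
      ∀ x d : ℤ, 0 ≤ rhoCoef μ d x ∧ rhoCoef μ d x ≤ 1) ∧
    (∀ d : ℤ, μ {d - 1} ≠ 0 →
      ∀ (Ω : Type u) [MeasurableSpace Ω] (P : Measure Ω) (N Z : Ω → ℤ),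
        HasLaw N (μ[|Set.Iic d]) P → AEMeasurable Z P →
        (∀ᵐ ω ∂P, Z ω = 0 ∨ Z ω = 1) →
        (∀ n : ℤ, P ({ω | Z ω = 1} ∩ {ω | N ω = n}) =
          ENNReal.ofReal (rhoCoef μ d n) * P {ω | N ω = n}) →
        HasLaw (fun ω => N ω - Z ω) (μ[|Set.Iic (d - 1)]) P) := by
  refine ⟨fun hsq x d => ⟨rhoCoef_nonneg, ?_⟩, fun d hd Ω _ P N Z hN hZm hZ01 hZ => ?_⟩
  · have hpoint : ∀ z, μ {z} ≠ ∞ := fun z => measure_singleton_ne_top_of_Iic (hfin z) le_rfl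
    exact rhoCoef_le_one (isLogConcaveSeq_measureReal hpoint hS hsq) (hfin (d - 1))
  · exact hasLaw_sub_cond_Iic_sub_one hS (hfin d) hd hN hZm hZ01 hZ

/-- (a) For a lattice log concave `M` the quantity `ρ_x^{(d)}` lies in `[0,1]`; and
(b) if `d-1` lies in the support, `N` has the law of `M` conditioned on `M ≤ d`, and
given `N` the variable `Z` is Bernoulli with success probability `ρ_N^{(d)}`, then
`N - Z` has the law of `M` conditioned on `M ≤ d - 1`. -/
theorem subtract_one_coupling_of_latticeLogConcave
    (μM : Measure ℤ) [IsProbabilityMeasure μM] (hLC : IsLatticeLogConcave μM) :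
    (∀ x d : ℤ, 0 ≤ rhoCoef μM d x ∧ rhoCoef μM d x ≤ 1) ∧
    (∀ d : ℤ, μM {d - 1} ≠ 0 →
      ∀ (Ω : Type) (mΩ : MeasurableSpace Ω) (P : Measure Ω), IsProbabilityMeasure P →
      ∀ N Z : Ω → ℤ, Measurable N → Measurable Z →
        Measure.map N P = μM[|Set.Iic d] →
        (∀ ω, Z ω = 0 ∨ Z ω = 1) →
        (∀ n : ℤ, P ({ω | Z ω = 1} ∩ {ω | N ω = n}) =
          ENNReal.ofReal (rhoCoef μM d n) * P {ω | N ω = n}) →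
        Measure.map (fun ω => N ω - Z ω) P = μM[|Set.Iic (d - 1)]) :=
  have h := subtract_one_coupling_of_latticeLogConcave_general (fun _ => measure_ne_top μM _)
    hLC.ordConnected_support
  ⟨h.1 hLC.2, fun d hd Ω _ P _ N Z hN hZ hlaw hZ01 hcond =>
    (h.2 d hd Ω P N Z ⟨hN.aemeasurable, hlaw⟩ hZ.aemeasurable (ae_of_all P hZ01) hcond).map_eq⟩
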